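/- Let G be an n-vertex graph containing no path on t vertices as a subgraph. Then G has at most (t−2)·n/2 edges. -/

import Mathlib

/-!
Let `m = t - 2`, so that every path of `G` has length at most `m`, and induct on the number of
vertices. Take a longest path `p` from `u` to `v`; all neighbours of `u` and of `v` lie on it. If
`deg u + deg v ≤ length p`, then one of the two endpoints has degree at most `m / 2` and may be
deleted. Otherwise, by pigeonhole, two consecutive vertices `x`, `y` of `p` satisfy `u ~ y` and
`x ~ v`, so the vertices of `p` can be traversed cyclically. Opening the cycle anywhere shows that
each of these vertices starts a longest path; hence no edge leaves the vertex set of `p`, which has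
at most `m + 1` elements, all of degree at most `m`, and may be deleted as a whole.
-/

namespace ErdosGallai

open Finset SimpleGraph

variable {V : Type*} {G : SimpleGraph V} {u v : V}

section VertexDeletion

lemma degree_lt_card_of_neighborSet_subset [Fintype (G.neighborSet v)] {s : Finset V}
    (hv : v ∈ s) (hs : G.neighborSet v ⊆ s) : G.degree v < #s :=
  card_lt_card <| (ssubset_iff_of_subset fun w hw ↦ hs <| (G.mem_neighborFinset v w).1 hw).2
    ⟨v, hv, by simp⟩

variable [Fintype V] [DecidableEq V] [DecidableRel G.Adj]

variable (G) in
lemma card_edgeFinset_eq_degree_add_card_edgeFinset_induce_compl (v : V) :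
    #G.edgeFinset = G.degree v + #(G.induce {v}ᶜ).edgeFinset := by
  have hle : G.degree v ≤ #G.edgeFinset := by
    rw [← card_incidenceFinset_eq_degree]
    exact card_le_card (G.incidenceFinset_subset v)
  rw [card_edgeFinset_induce_compl_singleton, card_edgeFinset_deleteIncidenceSet]
  omega

lemma two_mul_card_edgeFinset_eq_sum_degree_add_of_neighborSet_subset {s : Finset V}
    (hs : ∀ v ∈ s, G.neighborSet v ⊆ s) :
    2 * #G.edgeFinset = ∑ v ∈ s, G.degree v + 2 * #(G.induce (s : Set V)ᶜ).edgeFinset := by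
  have hcompl (v : ↥((s : Set V)ᶜ)) : (G.induce (s : Set V)ᶜ).degree v = G.degree v :=
    degree_induce_of_neighborSet_subset fun w hvw hw ↦ v.2 (hs w hw (G.adj_symm hvw))
  simp only [← sum_degrees_eq_twice_card_edges, hcompl]
  have hmem (v : V) : v ∈ sᶜ ↔ v ∈ (s : Set V)ᶜ := by simp
  rw [← sum_add_sum_compl s, sum_subtype sᶜ hmem]

end VertexDeletion

lemma exists_support_perm_support_tail {c : G.Walk u u} (hc : ¬ c.Nil) {x : V}
    (hx : x ∈ c.support) : ∃ y, ∃ q : G.Walk x y, q.support.Perm c.support.tail := by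
  classical
  have hnil : ¬ (c.rotate x hx).Nil := by simpa using hc
  refine ⟨_, (c.rotate x hx).tail.reverse, ?_⟩
  rw [Walk.support_reverse, Walk.support_tail_of_not_nil _ hnil]
  exact (List.reverse_perm _).trans (c.support_rotate x hx).perm

-- The walk is an opening of the cycle `u → y ⋯ v → x ⋯ u` made of `q` and the reverse of `p`.
lemma exists_support_perm_support_append {x y : V} (p : G.Walk u x) (q : G.Walk y v)
    (huy : G.Adj u y) (hvx : G.Adj v x) {w : V} (hw : w ∈ p.support ++ q.support) :
    ∃ z, ∃ r : G.Walk w z, r.support.Perm (p.support ++ q.support) := by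
  let c : G.Walk u u := .cons huy (q.append (.cons hvx p.reverse))
  have hc : c.support.tail.Perm (p.support ++ q.support) := by
    simp only [c, Walk.support_cons, List.tail_cons, Walk.support_append, Walk.support_reverse]
    exact List.perm_append_comm.trans ((List.reverse_perm _).append_right _)
  obtain ⟨z, r, hr⟩ := exists_support_perm_support_tail (c := c) Walk.not_nil_cons
    (List.mem_of_mem_tail (hc.mem_iff.2 hw))
  exact ⟨z, r, hr.trans hc⟩

lemma support_take_append_support_drop_succ (p : G.Walk u v) {i : ℕ} (hi : i < p.length) :
    (p.take i).support ++ (p.drop (i + 1)).support = p.support := by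
  rw [Walk.support_take, Walk.drop_support_eq_support_drop_min, min_eq_left hi,
    List.take_append_drop]

lemma degree_le_card_filter_adj [Fintype (G.neighborSet v)] [DecidableRel G.Adj] {ι : Type*}
    {s : Finset ι} {f : ι → V} (hf : G.neighborSet v ⊆ f '' s) :
    G.degree v ≤ #{i ∈ s | G.Adj v (f i)} := by
  refine card_le_card_of_surjOn f fun w hw ↦ ?_
  have hvw : G.Adj v w := by simpa using hw
  obtain ⟨i, hi, rfl⟩ := hf hvw
  exact ⟨i, by simpa using ⟨hi, hvw⟩, rfl⟩

lemma exists_adj_getVert_succ_and_adj_getVert [Fintype (G.neighborSet u)]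
    [Fintype (G.neighborSet v)] {p : G.Walk u v} (hu : ∀ w, G.Adj u w → w ∈ p.support)
    (hv : ∀ w, G.Adj v w → w ∈ p.support) (hdeg : p.length < G.degree u + G.degree v) :
    ∃ i < p.length, G.Adj u (p.getVert (i + 1)) ∧ G.Adj v (p.getVert i) := by
  classical
  have hu_image : G.neighborSet u ⊆ (fun i ↦ p.getVert (i + 1)) '' (range p.length : Finset ℕ) := by
    intro w huw
    obtain ⟨_ | i, rfl, hi⟩ := Walk.mem_support_iff_exists_getVert.1 (hu w huw)
    · simp at huw
    · exact ⟨i, by simpa using hi, rfl⟩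
  have hv_image : G.neighborSet v ⊆ p.getVert '' (range p.length : Finset ℕ) := by
    intro w hvw
    obtain ⟨i, rfl, hi⟩ := Walk.mem_support_iff_exists_getVert.1 (hv w hvw)
    have hne : i ≠ p.length := by rintro rfl; simp at hvw
    exact ⟨i, by simpa using lt_of_le_of_ne hi hne, rfl⟩
  have hcard : #(range p.length) < #{i ∈ range p.length | G.Adj u (p.getVert (i + 1))} +
      #{i ∈ range p.length | G.Adj v (p.getVert i)} := by
    grw [card_range, ← degree_le_card_filter_adj hu_image, ← degree_le_card_filter_adj hv_image]
    exact hdeg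
  obtain ⟨i, hi⟩ :=
    inter_nonempty_of_card_lt_card_add_card (filter_subset _ _) (filter_subset _ _) hcard
  simp only [mem_inter, mem_filter, mem_range] at hi
  exact ⟨i, hi.1.1, hi.1.2, hi.2.2⟩

/-- A path of maximum length among all paths of `G`, whatever their endpoints. -/
def IsLongestPath (p : G.Walk u v) : Prop :=
  p.IsPath ∧ ∀ ⦃x y : V⦄ (q : G.Walk x y), q.IsPath → q.length ≤ p.length

namespace IsLongestPath

variable {p : G.Walk u v}

lemma mem_support_of_adj (hp : IsLongestPath p) {w : V} (huw : G.Adj u w) : w ∈ p.support := by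
  by_contra hw
  have hlen := hp.2 (.cons huw.symm p) (hp.1.cons hw)
  simp at hlen

lemma reverse (hp : IsLongestPath p) : IsLongestPath p.reverse :=
  ⟨hp.1.reverse, by simpa using hp.2⟩

lemma of_support_perm (hp : IsLongestPath p) {x y : V} {q : G.Walk x y}
    (hq : q.support.Perm p.support) : IsLongestPath q := by
  have hlen : q.length = p.length := by simpa using hq.length_eq
  exact ⟨.mk' (hq.nodup_iff.2 hp.1.support_nodup), hlen ▸ hp.2⟩

lemma neighborSet_subset_support [Fintype (G.neighborSet u)] [Fintype (G.neighborSet v)]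
    (hp : IsLongestPath p) (hdeg : p.length < G.degree u + G.degree v) {x : V}
    (hx : x ∈ p.support) : G.neighborSet x ⊆ {y | y ∈ p.support} := by
  obtain ⟨i, hi, hui, hvi⟩ := exists_adj_getVert_succ_and_adj_getVert
    (fun _ ↦ hp.mem_support_of_adj) (fun _ hw ↦ by simpa using hp.reverse.mem_support_of_adj hw)
    hdeg
  have hsplit := support_take_append_support_drop_succ p hi
  obtain ⟨z, q, hq⟩ := exists_support_perm_support_append (p.take i) (p.drop (i + 1)) hui hvi
    (hsplit ▸ hx)
  rw [hsplit] at hq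
  exact fun y hxy ↦ hq.mem_iff.1 ((hp.of_support_perm hq).mem_support_of_adj hxy)

end IsLongestPath

variable (G) in
lemma exists_isLongestPath [Nonempty V] [Finite G.edgeSet] :
    ∃ (u v : V) (p : G.Walk u v), IsLongestPath p := by
  obtain ⟨u, v, p, hp, hmax⟩ := Walk.exists_isPath_forall_isPath_length_le_length G
  exact ⟨u, v, p, hp, hmax⟩

lemma exists_two_mul_degree_le_or_exists_neighborSet_subset [Nonempty V]
    [Finite G.edgeSet] [G.LocallyFinite] {m : ℕ}
    (hG : ∀ ⦃u v : V⦄ (p : G.Walk u v), p.IsPath → p.length ≤ m) :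
    (∃ v, 2 * G.degree v ≤ m) ∨
      ∃ s : Finset V, s.Nonempty ∧ #s ≤ m + 1 ∧ ∀ v ∈ s, G.neighborSet v ⊆ s := by
  classical
  obtain ⟨u, v, p, hp⟩ := exists_isLongestPath G
  have hlen := hG p hp.1
  rcases le_or_gt (G.degree u + G.degree v) p.length with hdeg | hdeg
  · left
    rcases le_total (G.degree u) (G.degree v) with huv | huv
    · exact ⟨u, by omega⟩
    · exact ⟨v, by omega⟩
  · refine .inr ⟨p.support.toFinset, ⟨u, by simp⟩, ?_, fun x hx ↦ ?_⟩
    · grw [List.toFinset_card_le, Walk.length_support, hlen]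
    · simpa using hp.neighborSet_subset_support hdeg (List.mem_toFinset.1 hx)

lemma exists_nonempty_two_mul_card_edgeFinset_le_add [Fintype V] [Nonempty V] [DecidableEq V]
    [DecidableRel G.Adj] {m : ℕ}
    (hG : ∀ ⦃u v : V⦄ (p : G.Walk u v), p.IsPath → p.length ≤ m) :
    ∃ s : Finset V, s.Nonempty ∧
      2 * #G.edgeFinset ≤ m * #s + 2 * #(G.induce (s : Set V)ᶜ).edgeFinset := by
  obtain ⟨v, hv⟩ | ⟨s, hne, hcard, hs⟩ :=
    exists_two_mul_degree_le_or_exists_neighborSet_subset hG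
  · refine ⟨{v}, singleton_nonempty v, ?_⟩
    have hedge := card_edgeFinset_eq_degree_add_card_edgeFinset_induce_compl G v
    have hsingleton :
        #(G.induce {v}ᶜ).edgeFinset = #(G.induce (({v} : Finset V) : Set V)ᶜ).edgeFinset := by
      congr! <;> simp
    rw [card_singleton]
    omega
  · refine ⟨s, hne, ?_⟩
    have hdeg : ∀ v ∈ s, G.degree v ≤ m := fun v hv ↦
      Nat.le_of_lt_succ <| (degree_lt_card_of_neighborSet_subset hv (hs v hv)).trans_le hcard
    grw [two_mul_card_edgeFinset_eq_sum_degree_add_of_neighborSet_subset hs,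
      sum_le_card_nsmul s _ m hdeg, smul_eq_mul, mul_comm]

theorem two_mul_card_edgeFinset_le_of_forall_isPath_length_le [Fintype V] [DecidableRel G.Adj]
    {m : ℕ} (hG : ∀ ⦃u v : V⦄ (p : G.Walk u v), p.IsPath → p.length ≤ m) :
    2 * #G.edgeFinset ≤ m * Fintype.card V := by
  induction hn : Fintype.card V using Nat.strong_induction_on generalizing V with
  | _ n ih =>
  classical
  obtain _ | _ := isEmpty_or_nonempty V
  · simp [← sum_degrees_eq_twice_card_edges]
  obtain ⟨s, hs, hle⟩ := exists_nonempty_two_mul_card_edgeFinset_le_add hG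
  have hcard : #s + Fintype.card ↥((s : Set V)ᶜ) = n := by
    rw [Fintype.card_compl_set, hn]
    simp [← hn, s.card_le_univ]
  have hinduce : ∀ ⦃u v⦄ (p : (G.induce (s : Set V)ᶜ).Walk u v), p.IsPath → p.length ≤ m :=
    fun u v p hp ↦
      Walk.length_map _ p ▸ hG _ (hp.map (f := (Embedding.induce _).toHom) Subtype.val_injective)
  have hlt : Fintype.card ↥((s : Set V)ᶜ) < n := by have := hs.card_pos; omega
  grw [hle, ih _ hlt hinduce rfl, ← mul_add, hcard]

lemma exists_injective_forall_adj_of_isPath {p : G.Walk u v} (hp : p.IsPath) {t : ℕ}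
    (ht : t ≤ p.length + 1) :
    ∃ f : Fin t → V, Function.Injective f ∧
      ∀ (i : ℕ) (h : i + 1 < t), G.Adj (f ⟨i, Nat.lt_of_succ_lt h⟩) (f ⟨i + 1, h⟩) := by
  refine ⟨fun i ↦ p.getVert i, fun i j hij ↦ Fin.ext ?_, fun i hi ↦ ?_⟩
  · exact hp.getVert_injOn (by simp; omega) (by simp; omega) hij
  · exact p.adj_getVert_succ (Nat.lt_of_succ_lt_succ (hi.trans_le ht))

end ErdosGallai

theorem stmt_9 {V : Type*} [Fintype V] (G : SimpleGraph V) [DecidableRel G.Adj] (t : ℕ)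
    (hfree : ¬ ∃ f : Fin t → V, Function.Injective f ∧
      ∀ (i : ℕ) (h : i + 1 < t), G.Adj (f ⟨i, Nat.lt_of_succ_lt h⟩) (f ⟨i + 1, h⟩)) :
    2 * G.edgeFinset.card ≤ (t - 2) * Fintype.card V := by
  have hlen : ∀ ⦃u v : V⦄ (p : G.Walk u v), p.IsPath → p.length + 1 < t := fun u v p hp ↦
    lt_of_not_ge fun ht ↦ hfree (ErdosGallai.exists_injective_forall_adj_of_isPath hp ht)
  exact ErdosGallai.two_mul_card_edgeFinset_le_of_forall_isPath_length_le fun u v p hp ↦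
    Nat.le_sub_of_add_le (hlen p hp)
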